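/- arXiv:1604.05163 — 2 statements merged into one kernel-verified Lean document; each statement's English description precedes it below -/
import Mathlib

section
/- Let b, c, ν, s ∈ ℂ with Re(c) > 0, Re(ν) > -1, Re(s) > 0, Re(c+ν+s) > 0, and such that ν+m is not a nonpositive integer for any integer m ≥ 0; let z > 0 be real. Then the Mellin transform in the parameter ρ satisfies ∫_0^∞ ρ^{s-1} G_ν^{(b,c)}(z;ρ) dρ (integral over real ρ ∈ (0,∞)) = (Γ(s)Γ(c+ν+s)/(Γ(ν+1)² Γ(c))) · ₂F₃((c+ν+s)/2, (c+ν+s+1)/2; ν+1, (ν+1)/2, (ν+2)/2; -b z²/4) · Σ_{m=0}^∞ ((ν+2m) Γ(ν+m)/m!) · J_{ν+2m}(z). -/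
open Complex MeasureTheory Real Set

/-- Extended Gamma function `Γ_ρ(x) = ∫_0^∞ t^(x-1) e^(-t-ρ/t) dt`. -/
noncomputable def extGamma (ρ x : ℂ) : ℂ :=
  ∫ t in Ioi (0:ℝ), (t:ℂ) ^ (x - 1) * Complex.exp (-(t:ℂ) - ρ / (t:ℂ))

/-- Generalized Pochhammer symbol `(c;ρ)_μ = Γ_ρ(c+μ)/Γ(c)`. -/
noncomputable def genPoch (c ρ μ : ℂ) : ℂ := extGamma ρ (c + μ) / Complex.Gamma c

/-- Unified four parameter Bessel function `G_ν^{(b,c)}(z;ρ)` with complex order,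
powers being principal complex powers. -/
noncomputable def unifiedG (b c ν ρ z : ℂ) : ℂ :=
  ∑' k : ℕ, (-b) ^ k * genPoch c ρ (2 * (k:ℂ) + ν) * (z / 2) ^ (2 * (k:ℂ) + ν) /
    ((k.factorial : ℂ) * Complex.Gamma (ν + (k:ℂ) + 1) * Complex.Gamma (ν + 2 * (k:ℂ) + 1))

/-- Unified four parameter Bessel function with integer order, powers being integer powers. -/
noncomputable def unifiedGInt (b c ρ : ℂ) (ν : ℤ) (z : ℂ) : ℂ :=
  ∑' k : ℕ, (-b) ^ k * genPoch c ρ (2 * (k:ℂ) + (ν:ℂ)) * (z / 2) ^ (2 * (k:ℤ) + ν) /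
    ((k.factorial : ℂ) * Complex.Gamma ((ν:ℂ) + (k:ℂ) + 1) * Complex.Gamma ((ν:ℂ) + 2 * (k:ℂ) + 1))

/-- Pochhammer symbol `(a)_k = Γ(a+k)/Γ(a)`. -/
noncomputable def poch (a : ℂ) (k : ℕ) : ℂ := Complex.Gamma (a + (k:ℂ)) / Complex.Gamma a

/-- Generalized hypergeometric function `₀F₃`. -/
noncomputable def hyp0F3 (a₁ a₂ a₃ w : ℂ) : ℂ :=
  ∑' k : ℕ, w ^ k / (poch a₁ k * poch a₂ k * poch a₃ k * (k.factorial : ℂ))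

/-- Generalized hypergeometric function `₂F₃`. -/
noncomputable def hyp2F3 (a₁ a₂ b₁ b₂ b₃ w : ℂ) : ℂ :=
  ∑' k : ℕ, poch a₁ k * poch a₂ k * w ^ k /
    (poch b₁ k * poch b₂ k * poch b₃ k * (k.factorial : ℂ))

/-- Bessel function of the first kind `J_μ(z)` for real `z > 0`. -/
noncomputable def besselJ (μ : ℂ) (z : ℝ) : ℂ :=
  ∑' k : ℕ, (-1) ^ k * ((z:ℂ) / 2) ^ (2 * (k:ℂ) + μ) /
    ((k.factorial : ℂ) * Complex.Gamma (μ + (k:ℂ) + 1))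

/-- Generalized four parameter spherical Bessel function
`g_ν^{(b,c)}(z;ρ) = √(π/(2z)) · G_{ν+1/2}^{(b,c-1/2)}(z;ρ)`. -/
noncomputable def sphG (b c ν ρ : ℂ) (z : ℝ) : ℂ :=
  (Real.sqrt (π / (2 * z)) : ℂ) * unifiedG b (c - 1/2) (ν + 1/2) ρ (z:ℂ)

/-- Generalized four parameter Bessel-Clifford function
`C_ν^{(b,λ)}(z;ρ) = z^{-ν/2} · G_ν^{(b,λ)}(2√z;ρ)` for real `z > 0`. -/
noncomputable def cliffC (b lam ν ρ : ℂ) (z : ℝ) : ℂ :=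
  (z:ℂ) ^ (-ν / 2) * unifiedG b lam ν ρ ((2 * Real.sqrt z : ℝ) : ℂ)

/-!
The parameter `ρ` enters `Γ_ρ(x)` only through the factor `e^(-ρ/t)`, so Fubini's theorem turns the
Mellin transform of `ρ ↦ Γ_ρ(x)` at `s` into `Γ(s) Γ(s+x)`. Applied to each term of the series of
`G_ν^{(b,c)}(z;ρ)`, where Legendre's duplication formula writes `Γ(A+2k)` and `Γ(ν+1+2k)` through
Pochhammer symbols, this gives the `₂F₃` series with the prefactor `(z/2)^ν`; since a `₂F₃` series
converges absolutely everywhere, sum and integral may be exchanged. Finally `(z/2)^ν` is the Neumann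
series `∑ m, (ν+2m) Γ(ν+m)/m! * J_{ν+2m}(z)`: expanded in powers of `z/2`, the coefficients along
each antidiagonal other than the first form a telescoping sum equal to `0`.
-/

section ReciprocalLaplace

variable {E : Type*} [NormedAddCommGroup E] [NormedSpace ℂ E] {f : ℝ → E} {s : ℂ}

/-- The transform `ρ ↦ ∫_0^∞ e^(-ρ/t) f(t) dt`, a Laplace transform in the variable `1/t`. It
represents `extGamma ρ x`, with `f(t) = t^(x-1) e^(-t)`, in a form that makes the dependence on `ρ`
independent of `x`. -/
noncomputable def reciprocalLaplace (f : ℝ → E) (ρ : ℝ) : E :=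
  ∫ t in Ioi (0 : ℝ), Complex.exp (-((ρ : ℂ) / t)) • f t

lemma integral_cpow_mul_exp_neg_div (hs : 0 < s.re) {t : ℝ} (ht : 0 < t) :
    ∫ ρ in Ioi (0 : ℝ), (ρ : ℂ) ^ (s - 1) * Complex.exp (-((ρ : ℂ) / t)) =
      Complex.Gamma s * (t : ℂ) ^ s := by
  have h := Complex.integral_cpow_mul_exp_neg_mul_Ioi hs (inv_pos.mpr ht)
  simpa [div_eq_inv_mul, mul_comm (Complex.Gamma s)] using h

lemma integrableOn_cpow_mul_exp_neg_div (hs : 0 < s.re) {t : ℝ} (ht : 0 < t) :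
    IntegrableOn (fun ρ : ℝ => (ρ : ℂ) ^ (s - 1) * Complex.exp (-((ρ : ℂ) / t))) (Ioi 0) := by
  refine Integrable.of_integral_ne_zero ?_
  rw [integral_cpow_mul_exp_neg_div hs ht]
  exact mul_ne_zero (Complex.Gamma_ne_zero_of_re_pos hs)
    (Complex.cpow_ne_zero_iff_of_exponent_ne_zero (by rintro rfl; simp at hs) |>.mpr
      (Complex.ofReal_ne_zero.mpr ht.ne'))

lemma integral_norm_cpow_mul_exp_neg_div (hs : 0 < s.re) {t : ℝ} (ht : 0 < t) :
    ∫ ρ in Ioi (0 : ℝ), ‖(ρ : ℂ) ^ (s - 1) * Complex.exp (-((ρ : ℂ) / t))‖ =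
      Real.Gamma s.re * ‖(t : ℂ) ^ s‖ := by
  have norm_eq : EqOn (fun ρ : ℝ => ‖(ρ : ℂ) ^ (s - 1) * Complex.exp (-((ρ : ℂ) / t))‖)
      (fun ρ => ρ ^ (s.re - 1) * Real.exp (-(t⁻¹ * ρ))) (Ioi 0) := fun ρ hρ => by
    have exponent : -((ρ : ℂ) / t) = ((-(t⁻¹ * ρ) : ℝ) : ℂ) := by push_cast; ring
    simp only [norm_mul, Complex.norm_cpow_eq_rpow_re_of_pos hρ, Complex.sub_re, Complex.one_re,
      exponent, Complex.norm_exp_ofReal]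
  rw [setIntegral_congr_fun measurableSet_Ioi norm_eq,
    Real.integral_rpow_mul_exp_neg_mul_Ioi hs (inv_pos.mpr ht), one_div, inv_inv, mul_comm,
    Complex.norm_cpow_eq_rpow_re_of_pos ht]

lemma aestronglyMeasurable_of_mellinConvergent (hf : MellinConvergent f s) :
    AEStronglyMeasurable f (volume.restrict (Ioi 0)) := by
  have h : AEStronglyMeasurable (fun t : ℝ => (t : ℂ) ^ (-(s - 1)) • ((t : ℂ) ^ (s - 1) • f t))
      (volume.restrict (Ioi 0)) :=
    (by fun_prop : Measurable fun t : ℝ => (t : ℂ) ^ (-(s - 1))).aestronglyMeasurable.smul hf.1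
  refine h.congr ((ae_restrict_mem measurableSet_Ioi).mono fun t ht => ?_)
  have ht0 : (t : ℂ) ≠ 0 := Complex.ofReal_ne_zero.mpr (mem_Ioi.mp ht).ne'
  simp only [smul_smul, ← Complex.cpow_add _ _ ht0, neg_add_cancel, Complex.cpow_zero, one_smul]

/-- The integrand of the double integral `∫ ρ^(s-1) ∫ e^(-ρ/t) f(t) dt dρ` to which Fubini's theorem
is applied. -/
noncomputable def mellinLaplaceKernel (s : ℂ) (f : ℝ → E) (ρ t : ℝ) : E :=
  ((ρ : ℂ) ^ (s - 1) * Complex.exp (-((ρ : ℂ) / t))) • f t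

lemma integral_mellinLaplaceKernel [CompleteSpace E] (hs : 0 < s.re) (f : ℝ → E) {t : ℝ}
    (ht : 0 < t) :
    ∫ ρ in Ioi (0 : ℝ), mellinLaplaceKernel s f ρ t = Complex.Gamma s • ((t : ℂ) ^ s • f t) := by
  simp only [mellinLaplaceKernel]
  rw [integral_smul_const, integral_cpow_mul_exp_neg_div hs ht, mul_smul]

lemma integral_norm_mellinLaplaceKernel (hs : 0 < s.re) (f : ℝ → E) {t : ℝ} (ht : 0 < t) :
    ∫ ρ in Ioi (0 : ℝ), ‖mellinLaplaceKernel s f ρ t‖ =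
      Real.Gamma s.re * ‖(t : ℂ) ^ s • f t‖ := by
  simp only [mellinLaplaceKernel, norm_smul, integral_mul_const,
    integral_norm_cpow_mul_exp_neg_div hs ht, mul_assoc]

lemma integrable_mellinLaplaceKernel (hs : 0 < s.re) (hf : MellinConvergent f (s + 1)) :
    Integrable (Function.uncurry (mellinLaplaceKernel s f))
      ((volume.restrict (Ioi 0)).prod (volume.restrict (Ioi 0))) := by
  have scalar_measurable : Measurable fun p : ℝ × ℝ =>
      (p.1 : ℂ) ^ (s - 1) * Complex.exp (-((p.1 : ℂ) / p.2)) := by fun_prop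
  refine (integrable_prod_iff' (scalar_measurable.aestronglyMeasurable.smul
    (aestronglyMeasurable_of_mellinConvergent hf).comp_snd)).mpr ⟨?_, ?_⟩
  · filter_upwards [ae_restrict_mem measurableSet_Ioi] with t ht
    exact (integrableOn_cpow_mul_exp_neg_div hs ht).smul_const (f t)
  · have dominating :
        IntegrableOn (fun t : ℝ => Real.Gamma s.re * ‖(t : ℂ) ^ s • f t‖) (Ioi 0) := by
      simpa only [MellinConvergent, IntegrableOn, add_sub_cancel_right]
        using hf.norm.const_mul (Real.Gamma s.re)
    exact dominating.congr_fun (fun t ht => (integral_norm_mellinLaplaceKernel hs f ht).symm)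
      measurableSet_Ioi

lemma cpow_smul_reciprocalLaplace (s : ℂ) (f : ℝ → E) (ρ : ℝ) :
    (ρ : ℂ) ^ (s - 1) • reciprocalLaplace f ρ =
      ∫ t in Ioi (0 : ℝ), mellinLaplaceKernel s f ρ t := by
  simp only [reciprocalLaplace, mellinLaplaceKernel, mul_smul, integral_smul]

lemma mellinConvergent_reciprocalLaplace (hs : 0 < s.re) (hf : MellinConvergent f (s + 1)) :
    MellinConvergent (reciprocalLaplace f) s := by
  simp only [MellinConvergent, cpow_smul_reciprocalLaplace]
  exact (integrable_mellinLaplaceKernel hs hf).integral_prod_left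

lemma mellin_reciprocalLaplace [CompleteSpace E] (hs : 0 < s.re)
    (hf : MellinConvergent f (s + 1)) :
    mellin (reciprocalLaplace f) s = Complex.Gamma s • mellin f (s + 1) := by
  simp only [mellin, cpow_smul_reciprocalLaplace, add_sub_cancel_right]
  rw [integral_integral_swap (integrable_mellinLaplaceKernel hs hf),
    setIntegral_congr_fun measurableSet_Ioi fun t ht => integral_mellinLaplaceKernel hs f ht,
    integral_smul]

lemma integral_norm_cpow_smul_reciprocalLaplace_le (hs : 0 < s.re)
    (hf : MellinConvergent f (s + 1)) :
    ∫ ρ in Ioi (0 : ℝ), ‖(ρ : ℂ) ^ (s - 1) • reciprocalLaplace f ρ‖ ≤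
      Real.Gamma s.re * ∫ t in Ioi (0 : ℝ), ‖(t : ℂ) ^ s • f t‖ := by
  have kernel_integrable := (integrable_mellinLaplaceKernel hs hf).norm
  calc ∫ ρ in Ioi (0 : ℝ), ‖(ρ : ℂ) ^ (s - 1) • reciprocalLaplace f ρ‖
      ≤ ∫ ρ in Ioi (0 : ℝ), ∫ t in Ioi (0 : ℝ), ‖mellinLaplaceKernel s f ρ t‖ := by
        refine integral_mono (mellinConvergent_reciprocalLaplace hs hf).norm
          kernel_integrable.integral_prod_left fun ρ => ?_
        simp only [cpow_smul_reciprocalLaplace]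
        exact norm_integral_le_integral_norm _
    _ = ∫ t in Ioi (0 : ℝ), ∫ ρ in Ioi (0 : ℝ), ‖mellinLaplaceKernel s f ρ t‖ :=
        integral_integral_swap kernel_integrable
    _ = Real.Gamma s.re * ∫ t in Ioi (0 : ℝ), ‖(t : ℂ) ^ s • f t‖ := by
        rw [setIntegral_congr_fun measurableSet_Ioi fun t ht =>
          integral_norm_mellinLaplaceKernel hs f ht, integral_const_mul]

end ReciprocalLaplace

section ExtGamma

lemma extGamma_eq_reciprocalLaplace (x : ℂ) (ρ : ℝ) :
    extGamma ρ x =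
      reciprocalLaplace (fun t : ℝ => (t : ℂ) ^ (x - 1) • (Real.exp (-t) : ℂ)) ρ := by
  simp only [extGamma, reciprocalLaplace, smul_eq_mul, Complex.ofReal_exp, Complex.ofReal_neg]
  refine integral_congr_ae (.of_forall fun t => ?_)
  simp only [sub_eq_add_neg (-(t : ℂ)), Complex.exp_add]
  ring

lemma mellinConvergent_exp_neg {s : ℂ} (hs : 0 < s.re) :
    MellinConvergent (fun t => (Real.exp (-t) : ℂ)) s := by
  simpa only [MellinConvergent, smul_eq_mul, mul_comm] using Complex.GammaIntegral_convergent hs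

lemma mellinConvergent_cpow_smul_exp_neg {s x : ℂ} (hsx : 0 < (s + x).re) :
    MellinConvergent (fun t : ℝ => (t : ℂ) ^ (x - 1) • (Real.exp (-t) : ℂ)) (s + 1) := by
  rw [MellinConvergent.cpow_smul, add_add_sub_cancel]
  exact mellinConvergent_exp_neg hsx

variable {s x : ℂ} (hs : 0 < s.re) (hsx : 0 < (s + x).re)
include hs hsx

lemma mellinConvergent_extGamma : MellinConvergent (fun ρ : ℝ => extGamma ρ x) s := by
  simp only [extGamma_eq_reciprocalLaplace]
  exact mellinConvergent_reciprocalLaplace hs (mellinConvergent_cpow_smul_exp_neg hsx)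

lemma mellin_extGamma :
    mellin (fun ρ : ℝ => extGamma ρ x) s = Complex.Gamma s * Complex.Gamma (s + x) := by
  simp only [extGamma_eq_reciprocalLaplace]
  rw [mellin_reciprocalLaplace hs (mellinConvergent_cpow_smul_exp_neg hsx), mellin_cpow_smul,
    add_add_sub_cancel, Complex.Gamma_eq_integral hsx, Complex.GammaIntegral_eq_mellin, smul_eq_mul]

lemma integral_norm_cpow_smul_extGamma_le :
    ∫ ρ in Ioi (0 : ℝ), ‖(ρ : ℂ) ^ (s - 1) • extGamma ρ x‖ ≤
      Real.Gamma s.re * Real.Gamma (s + x).re := by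
  simp only [extGamma_eq_reciprocalLaplace]
  refine (integral_norm_cpow_smul_reciprocalLaplace_le hs
    (mellinConvergent_cpow_smul_exp_neg hsx)).trans_eq ?_
  rw [Real.Gamma_eq_integral hsx]
  congr 1
  refine setIntegral_congr_fun measurableSet_Ioi fun t (ht : 0 < t) => ?_
  have ht0 : (t : ℂ) ≠ 0 := Complex.ofReal_ne_zero.mpr ht.ne'
  simp only [smul_smul, ← Complex.cpow_add _ _ ht0, norm_smul,
    Complex.norm_cpow_eq_rpow_re_of_pos ht, Complex.norm_real, Real.norm_eq_abs, Real.abs_exp,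
    add_sub_assoc', Complex.sub_re, Complex.one_re, mul_comm]

end ExtGamma

section Pochhammer

lemma ne_neg_natCast_of_re_pos {a : ℂ} (ha : 0 < a.re) (n : ℕ) : a ≠ -n := fun h => by
  rw [h, Complex.neg_re, Complex.natCast_re] at ha
  linarith [n.cast_nonneg (α := ℝ)]

variable {a : ℂ} (ha : ∀ n : ℕ, a ≠ -n)
include ha

lemma add_natCast_ne_zero_of_ne_neg (m : ℕ) : a + m ≠ 0 :=
  fun h => ha m (eq_neg_of_add_eq_zero_left h)

lemma add_natCast_ne_neg_natCast (m n : ℕ) : a + m ≠ -n := fun h =>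
  ha (m + n) (by push_cast; linear_combination h)

lemma half_ne_neg_natCast (n : ℕ) : a / 2 ≠ -n := fun h =>
  ha (2 * n) (by push_cast; linear_combination 2 * h)

lemma add_one_half_ne_neg_natCast (n : ℕ) : (a + 1) / 2 ≠ -n :=
  half_ne_neg_natCast (by simpa using add_natCast_ne_neg_natCast ha 1) n

lemma Gamma_mul_poch (k : ℕ) : Complex.Gamma a * poch a k = Complex.Gamma (a + k) :=
  mul_div_cancel₀ _ (Complex.Gamma_ne_zero ha)

lemma poch_eq_ascPochhammer_eval (k : ℕ) : poch a k = (ascPochhammer ℂ k).eval a :=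
  Complex.Gamma_add_nat_div_Gamma_eq a ha

lemma poch_ne_zero (k : ℕ) : poch a k ≠ 0 :=
  div_ne_zero (Complex.Gamma_ne_zero (add_natCast_ne_neg_natCast ha k)) (Complex.Gamma_ne_zero ha)

lemma Gamma_add_two_mul (k : ℕ) :
    Complex.Gamma (a + 2 * k) =
      Complex.Gamma a * (4 ^ k * (poch (a / 2) k * poch ((a + 1) / 2) k)) := by
  have two_cpow : (2 : ℂ) ^ (1 - a) = 2 ^ (1 - (a + 2 * k)) * 4 ^ k := by
    rw [show (4 : ℂ) = 2 ^ 2 by norm_num, ← pow_mul, ← Complex.cpow_natCast,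
      ← Complex.cpow_add _ _ two_ne_zero]
    push_cast
    ring_nf
  have duplication := Complex.Gamma_mul_Gamma_add_half (a / 2)
  have duplication_shifted := Complex.Gamma_mul_Gamma_add_half (a / 2 + k)
  rw [mul_div_cancel₀ a two_ne_zero, ← add_div, two_cpow] at duplication
  rw [mul_add, mul_div_cancel₀ a two_ne_zero, add_right_comm, ← add_div,
    ← Gamma_mul_poch (half_ne_neg_natCast ha), ← Gamma_mul_poch (add_one_half_ne_neg_natCast ha),
    mul_mul_mul_comm, duplication] at duplication_shifted
  have factor_ne_zero : (2 : ℂ) ^ (1 - (a + 2 * k)) * (√π : ℝ) ≠ 0 :=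
    mul_ne_zero (by simp [Complex.cpow_eq_zero_iff])
      (Complex.ofReal_ne_zero.mpr (Real.sqrt_ne_zero'.mpr pi_pos))
  refine mul_right_cancel₀ factor_ne_zero ?_
  linear_combination -duplication_shifted

end Pochhammer

section Hypergeometric

/-- The `k`-th term of the series `₂F₃(a₁, a₂; b₁, b₂, b₃; w)`. -/
noncomputable def hyp2F3Term (a₁ a₂ b₁ b₂ b₃ w : ℂ) (k : ℕ) : ℂ :=
  poch a₁ k * poch a₂ k * w ^ k / (poch b₁ k * poch b₂ k * poch b₃ k * (k.factorial : ℂ))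

lemma summable_regularizedHGFunCoeff_mul_pow {a b : Multiset ℂ} (h : a.card ≤ b.card) (w : ℂ) :
    Summable fun k => regularizedHGFunCoeff a b k * w ^ k := by
  have hw : w ∈ Metric.eball 0 (regularizedHGFunSeries a b).radius := by
    simp [radius_regularizedHGFunSeries_eq_top h]
  simpa only [regularizedHGFunSeries, FormalMultilinearSeries.ofScalars_apply_eq, smul_eq_mul]
    using (regularizedHGFunSeries a b).summable hw

lemma summable_hyp2F3Term {a₁ a₂ b₁ b₂ b₃ : ℂ} (ha₁ : ∀ n : ℕ, a₁ ≠ -n) (ha₂ : ∀ n : ℕ, a₂ ≠ -n)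
    (hb₁ : ∀ n : ℕ, b₁ ≠ -n) (hb₂ : ∀ n : ℕ, b₂ ≠ -n) (hb₃ : ∀ n : ℕ, b₃ ≠ -n) (w : ℂ) :
    Summable (hyp2F3Term a₁ a₂ b₁ b₂ b₃ w) := by
  refine ((summable_regularizedHGFunCoeff_mul_pow (a := {a₁, a₂}) (b := {b₁, b₂, b₃})
    (by simp) w).mul_left
    (Complex.Gamma b₁ * Complex.Gamma b₂ * Complex.Gamma b₃)).congr fun k => ?_
  have h₁ := Complex.Gamma_ne_zero hb₁
  have h₂ := Complex.Gamma_ne_zero hb₂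
  have h₃ := Complex.Gamma_ne_zero hb₃
  simp only [hyp2F3Term, regularizedHGFunCoeff, Multiset.insert_eq_cons, Multiset.map_cons,
    Multiset.map_singleton, Multiset.prod_cons, Multiset.prod_singleton, ← Gamma_mul_poch hb₁,
    ← Gamma_mul_poch hb₂, ← Gamma_mul_poch hb₃, poch_eq_ascPochhammer_eval ha₁,
    poch_eq_ascPochhammer_eval ha₂]
  field_simp

/-- The coefficients of the series
`G_ν^{(b,c)}(z;ρ) = (z/2)^ν / Γ(c) * ∑ k, unifiedGCoeff ν k * (-b z²/4)^k * Γ_ρ(c+ν+2k)`. -/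
noncomputable def unifiedGCoeff (ν : ℂ) (k : ℕ) : ℂ :=
  1 / ((k.factorial : ℂ) * Complex.Gamma (ν + k + 1) * Complex.Gamma (ν + 2 * k + 1))

variable {ν A : ℂ} (hν : ∀ n : ℕ, ν + 1 ≠ -n) (hA : ∀ n : ℕ, A ≠ -n) (w : ℂ)
include hν hA

lemma unifiedGCoeff_mul_Gamma (k : ℕ) :
    unifiedGCoeff ν k * w ^ k * Complex.Gamma (A + 2 * k) =
      Complex.Gamma A / Complex.Gamma (ν + 1) ^ 2 *
        hyp2F3Term (A / 2) ((A + 1) / 2) (ν + 1) ((ν + 1) / 2) ((ν + 2) / 2) w k := by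
  have shift : (ν + 2) / 2 = (ν + 1 + 1) / 2 := by ring
  have h₁ := Complex.Gamma_ne_zero hν
  have h₂ := poch_ne_zero hν k
  have h₃ := poch_ne_zero (half_ne_neg_natCast hν) k
  have h₄ := poch_ne_zero (add_one_half_ne_neg_natCast hν) k
  rw [unifiedGCoeff, hyp2F3Term, shift, add_right_comm ν (k : ℂ), add_right_comm ν (2 * (k : ℂ)),
    ← Gamma_mul_poch hν, Gamma_add_two_mul hν, Gamma_add_two_mul hA]
  field_simp

lemma summable_unifiedGCoeff_mul_Gamma :
    Summable fun k : ℕ => unifiedGCoeff ν k * w ^ k * Complex.Gamma (A + 2 * k) := by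
  simp only [unifiedGCoeff_mul_Gamma hν hA]
  have shift : (ν + 2) / 2 = (ν + 1 + 1) / 2 := by ring
  rw [shift]
  exact (summable_hyp2F3Term (half_ne_neg_natCast hA) (add_one_half_ne_neg_natCast hA) hν
    (half_ne_neg_natCast hν) (add_one_half_ne_neg_natCast hν) w).mul_left _

lemma tsum_unifiedGCoeff_mul_Gamma :
    ∑' k : ℕ, unifiedGCoeff ν k * w ^ k * Complex.Gamma (A + 2 * k) =
      Complex.Gamma A / Complex.Gamma (ν + 1) ^ 2 *
        hyp2F3 (A / 2) ((A + 1) / 2) (ν + 1) ((ν + 1) / 2) ((ν + 2) / 2) w := by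
  simp only [unifiedGCoeff_mul_Gamma hν hA, tsum_mul_left]
  rfl

end Hypergeometric

section UnifiedG

lemma mellin_tsum {ι E : Type*} [Countable ι] [NormedAddCommGroup E] [NormedSpace ℂ E]
    {F : ι → ℝ → E} {s : ℂ} (hF : ∀ i, MellinConvergent (F i) s)
    (hF_sum : Summable fun i => ∫ t in Ioi (0 : ℝ), ‖(t : ℂ) ^ (s - 1) • F i t‖) :
    mellin (fun t => ∑' i, F i t) s = ∑' i, mellin (F i) s := by
  simp only [mellin, ← tsum_const_smul'']
  exact (integral_tsum_of_summable_integral_norm hF hF_sum).symm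

lemma cpow_two_mul_natCast_add {w : ℂ} (hw : w ≠ 0) (k : ℕ) (ν : ℂ) :
    w ^ (2 * (k : ℂ) + ν) = (w ^ 2) ^ k * w ^ ν := by
  rw [Complex.cpow_add _ _ hw, ← pow_mul, ← Complex.cpow_natCast]
  push_cast
  rfl

lemma unifiedG_eq_tsum_unifiedGCoeff {z : ℂ} (hz : z ≠ 0) (b c ν ρ : ℂ) :
    unifiedG b c ν ρ z = (z / 2) ^ ν / Complex.Gamma c *
      ∑' k : ℕ, unifiedGCoeff ν k * (-b * z ^ 2 / 4) ^ k * extGamma ρ (c + ν + 2 * k) := by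
  rw [unifiedG, ← tsum_mul_left]
  refine tsum_congr fun k => ?_
  have w_pow : (-b * z ^ 2 / 4) ^ k = (-b) ^ k * ((z / 2) ^ 2) ^ k := by
    rw [← mul_pow]
    ring
  rw [cpow_two_mul_natCast_add (div_ne_zero hz two_ne_zero), genPoch, unifiedGCoeff, w_pow,
    add_comm (2 * (k : ℂ)) ν, ← add_assoc]
  ring

lemma re_add_two_mul_natCast (s x : ℂ) (k : ℕ) :
    (s + x).re + 2 * k = (s + (x + 2 * k)).re := by
  simp [add_assoc]

lemma re_add_two_mul_natCast_pos {s x : ℂ} (hsx : 0 < (s + x).re) (k : ℕ) :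
    0 < (s + (x + 2 * k)).re := by
  rw [← re_add_two_mul_natCast]
  positivity

variable {ν s : ℂ} (hν : ∀ n : ℕ, ν + 1 ≠ -n) (hs : 0 < s.re)
include hν hs

lemma summable_integral_norm_unifiedGCoeff_mul_extGamma {x : ℂ} (hsx : 0 < (s + x).re)
    (w : ℂ) :
    Summable fun k : ℕ => ∫ ρ in Ioi (0 : ℝ),
      ‖(ρ : ℂ) ^ (s - 1) • (unifiedGCoeff ν k * w ^ k * extGamma ρ (x + 2 * k))‖ := by
  have re_ne_neg := ne_neg_natCast_of_re_pos (a := (s + x).re) (by simpa using hsx)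
  refine .of_nonneg_of_le (fun k => integral_nonneg fun ρ => norm_nonneg _) (fun k => ?_)
    ((summable_unifiedGCoeff_mul_Gamma hν re_ne_neg w).norm.mul_left (Real.Gamma s.re))
  have norm_Gamma : ‖Complex.Gamma ((s + x).re + 2 * k)‖ = Real.Gamma (s + (x + 2 * k)).re := by
    rw [← re_add_two_mul_natCast, ← Complex.ofReal_ofNat, ← Complex.ofReal_natCast,
      ← Complex.ofReal_mul, ← Complex.ofReal_add, Complex.Gamma_ofReal, Complex.norm_real,
      Real.norm_of_nonneg (Real.Gamma_nonneg_of_nonneg (by positivity))]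
  simp only [smul_eq_mul, mul_left_comm _ (unifiedGCoeff ν k * w ^ k),
    norm_mul (unifiedGCoeff ν k * w ^ k), integral_const_mul, norm_Gamma]
  rw [mul_left_comm]
  exact mul_le_mul_of_nonneg_left
    (integral_norm_cpow_smul_extGamma_le hs (re_add_two_mul_natCast_pos hsx k)) (norm_nonneg _)

lemma mellin_tsum_unifiedGCoeff_mul_extGamma {x : ℂ} (hsx : 0 < (s + x).re) (w : ℂ) :
    mellin (fun ρ : ℝ => ∑' k : ℕ, unifiedGCoeff ν k * w ^ k * extGamma ρ (x + 2 * k)) s =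
      ∑' k : ℕ, Complex.Gamma s *
        (unifiedGCoeff ν k * w ^ k * Complex.Gamma (s + x + 2 * k)) := by
  have convergent (k : ℕ) : MellinConvergent
      (fun ρ : ℝ => unifiedGCoeff ν k * w ^ k * extGamma ρ (x + 2 * k)) s :=
    (mellinConvergent_extGamma hs (re_add_two_mul_natCast_pos hsx k)).const_smul
      (unifiedGCoeff ν k * w ^ k)
  rw [mellin_tsum convergent (summable_integral_norm_unifiedGCoeff_mul_extGamma hν hs hsx w)]
  refine tsum_congr fun k => ?_
  refine (mellin_const_smul _ s (unifiedGCoeff ν k * w ^ k)).trans ?_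
  rw [mellin_extGamma hs (re_add_two_mul_natCast_pos hsx k), smul_eq_mul, add_assoc, mul_left_comm]

lemma mellin_unifiedG {b c z : ℂ} (hcs : 0 < (c + ν + s).re) (hz : z ≠ 0) :
    mellin (fun ρ : ℝ => unifiedG b c ν ρ z) s =
      (z / 2) ^ ν / Complex.Gamma c * (Complex.Gamma s * (Complex.Gamma (c + ν + s) /
        Complex.Gamma (ν + 1) ^ 2 * hyp2F3 ((c + ν + s) / 2) ((c + ν + s + 1) / 2)
          (ν + 1) ((ν + 1) / 2) ((ν + 2) / 2) (-b * z ^ 2 / 4))) := by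
  have hcs' : 0 < (s + (c + ν)).re := by rwa [add_comm]
  simp only [unifiedG_eq_tsum_unifiedGCoeff hz]
  refine (mellin_const_smul _ s ((z / 2) ^ ν / Complex.Gamma c)).trans ?_
  rw [mellin_tsum_unifiedGCoeff_mul_extGamma hν hs hcs', add_comm s, tsum_mul_left,
    tsum_unifiedGCoeff_mul_Gamma hν (ne_neg_natCast_of_re_pos hcs), smul_eq_mul]

end UnifiedG

section NeumannSeries

lemma tsum_tsum_eq_tsum_sum_antidiagonal {A E : Type*} [AddCommMonoid A] [Finset.HasAntidiagonal A]
    [NormedAddCommGroup E] [CompleteSpace E] {f : A × A → E} (hf : Summable f) :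
    ∑' m, ∑' k, f (m, k) = ∑' n, ∑ p ∈ Finset.HasAntidiagonal.antidiagonal n, f p := by
  rw [← hf.tsum_prod, ← Finset.HasAntidiagonal.sigmaAntidiagonalEquivProd.tsum_eq f]
  refine (Finset.HasAntidiagonal.sigmaAntidiagonalEquivProd.summable_iff.mpr hf).tsum_sigma.trans ?_
  exact tsum_congr fun n => Finset.tsum_subtype _ f

lemma exists_pos_le_norm_add_natCast {ν : ℂ} (hν : ∀ n : ℕ, ν ≠ -n) :
    ∃ δ > 0, ∀ n : ℕ, δ ≤ ‖ν + n‖ := by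
  have norm_tendsto : Filter.Tendsto (fun n : ℕ => ‖ν + n‖) Filter.cofinite Filter.atTop := by
    rw [Nat.cofinite_eq_atTop]
    refine Filter.tendsto_atTop_mono (fun n => ?_)
      (Filter.tendsto_atTop_add_const_right _ (-‖ν‖) tendsto_natCast_atTop_atTop)
    simpa [add_comm] using norm_sub_norm_le (n : ℂ) (-ν)
  obtain ⟨n₀, h⟩ := norm_tendsto.exists_forall_le
  exact ⟨‖ν + n₀‖, norm_pos_iff.mpr (add_natCast_ne_zero_of_ne_neg hν n₀), h⟩

lemma pow_mul_norm_Gamma_le {a : ℂ} {δ : ℝ} (hδ : 0 < δ) (ha : ∀ n : ℕ, δ ≤ ‖a + n‖) (n : ℕ) :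
    δ ^ n * ‖Complex.Gamma a‖ ≤ ‖Complex.Gamma (a + n)‖ := by
  induction n with
  | zero => simp
  | succ n ih =>
    have a_add_ne_zero : a + n ≠ 0 := norm_pos_iff.mp (hδ.trans_le (ha n))
    rw [Nat.cast_succ, ← add_assoc, Complex.Gamma_add_one _ a_add_ne_zero, norm_mul, pow_succ',
      mul_assoc]
    exact mul_le_mul (ha n) ih (by positivity) (norm_nonneg _)

/-- The `(m, k)` term, divided by `(z/2)^ν` and with `w = (z/2)^2`, of the double series obtained
from the Neumann series `∑ m, (ν+2m) Γ(ν+m)/m! * J_{ν+2m}(z)` by expanding the Bessel functions. -/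
noncomputable def neumannTerm (ν w : ℂ) (m k : ℕ) : ℂ :=
  (ν + 2 * m) * Complex.Gamma (ν + m) / (m.factorial : ℂ) *
    ((-1) ^ k * w ^ (k + m) / ((k.factorial : ℂ) * Complex.Gamma (ν + 2 * m + k + 1)))

lemma mul_besselJ_eq_tsum_neumannTerm (ν : ℂ) {z : ℝ} (hz : z ≠ 0) (m : ℕ) :
    (ν + 2 * (m : ℂ)) * Complex.Gamma (ν + m) / (m.factorial : ℂ) * besselJ (ν + 2 * m) z =
      ((z : ℂ) / 2) ^ ν * ∑' k, neumannTerm ν (((z : ℂ) / 2) ^ 2) m k := by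
  have half_ne_zero : (z : ℂ) / 2 ≠ 0 := by simpa using hz
  rw [besselJ, ← tsum_mul_left, ← tsum_mul_left]
  refine tsum_congr fun k => ?_
  have exponent : 2 * (k : ℂ) + (ν + 2 * m) = 2 * ((k + m : ℕ) : ℂ) + ν := by
    push_cast
    ring
  rw [exponent, cpow_two_mul_natCast_add half_ne_zero, neumannTerm]
  ring

lemma norm_neumannTerm_le {ν : ℂ} {δ : ℝ} (hδ : 0 < δ) (hδν : ∀ n : ℕ, δ ≤ ‖ν + n‖) (w : ℂ)
    (m k : ℕ) :
    ‖neumannTerm ν w m k‖ ≤ (‖ν‖ + 2) / δ * ((2 * (‖w‖ / δ)) ^ m / m.factorial) *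
      ((‖w‖ / δ) ^ k / k.factorial) := by
  have linear_factor : ‖ν + 2 * m‖ ≤ (‖ν‖ + 2) * 2 ^ m := by
    have m_lt : (m : ℝ) < 2 ^ m := by exact_mod_cast Nat.lt_two_pow_self
    have one_le : (1 : ℝ) ≤ 2 ^ m := one_le_pow₀ one_le_two
    calc ‖ν + 2 * m‖ ≤ ‖ν‖ + 2 * m := (norm_add_le _ _).trans (by simp)
      _ ≤ (‖ν‖ + 2) * 2 ^ m := by nlinarith [norm_nonneg ν]
  have hν (n : ℕ) : ν ≠ -n := fun h => by simpa [h, hδ.not_ge] using hδν n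
  have Gamma_pos : 0 < ‖Complex.Gamma (ν + m)‖ :=
    norm_pos_iff.mpr (Complex.Gamma_ne_zero (add_natCast_ne_neg_natCast hν m))
  have Gamma_ratio : ‖Complex.Gamma (ν + m)‖ / ‖Complex.Gamma (ν + 2 * m + k + 1)‖ ≤
      1 / δ ^ (m + k + 1) := by
    have growth := pow_mul_norm_Gamma_le (a := ν + m) hδ
      (fun n => by simpa [add_assoc] using hδν (m + n)) (m + k + 1)
    rw [show ν + m + ((m + k + 1 : ℕ) : ℂ) = ν + 2 * m + k + 1 by push_cast; ring] at growth
    rw [div_le_div_iff₀ (lt_of_lt_of_le (by positivity) growth) (by positivity)]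
    linarith
  calc ‖neumannTerm ν w m k‖
      = ‖ν + 2 * m‖ * (‖Complex.Gamma (ν + m)‖ / ‖Complex.Gamma (ν + 2 * m + k + 1)‖) *
        (‖w‖ ^ (k + m) / (m.factorial * k.factorial)) := by
        simp only [neumannTerm, norm_mul, norm_div, norm_pow, norm_neg, norm_one, one_pow,
          one_mul, Complex.norm_natCast]
        field_simp
    _ ≤ ((‖ν‖ + 2) * 2 ^ m) * (1 / δ ^ (m + k + 1)) *
        (‖w‖ ^ (k + m) / (m.factorial * k.factorial)) := by gcongr
    _ = (‖ν‖ + 2) / δ * ((2 * (‖w‖ / δ)) ^ m / m.factorial) *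
        ((‖w‖ / δ) ^ k / k.factorial) := by
        simp only [mul_pow, div_pow, pow_add]
        field_simp

variable {ν : ℂ} (hν : ∀ n : ℕ, ν ≠ -n)
include hν

lemma summable_neumannTerm (w : ℂ) : Summable fun p : ℕ × ℕ => neumannTerm ν w p.1 p.2 := by
  obtain ⟨δ, hδ, hδν⟩ := exists_pos_le_norm_add_natCast hν
  have dominating := ((Real.summable_pow_div_factorial (2 * (‖w‖ / δ))).mul_left
    ((‖ν‖ + 2) / δ)).mul_of_nonneg (Real.summable_pow_div_factorial (‖w‖ / δ))
    (fun m => by positivity) (fun k => by positivity)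
  exact dominating.of_norm_bounded fun p => norm_neumannTerm_le hδ hδν w p.1 p.2

-- The summand times `n` is `t (m + 1) - t m` with
-- `t m = (-1)^(m+1) * m * Γ(ν+m) * n.choose m / Γ(ν+n+m)`, and `t 0 = t (n + 1) = 0`.
lemma sum_range_neg_one_pow_mul_Gamma_mul_choose {n : ℕ} (hn : n ≠ 0) :
    ∑ m ∈ Finset.range (n + 1), (-1) ^ m * (ν + 2 * (m : ℂ)) * Complex.Gamma (ν + m) *
      (n.choose m : ℂ) / Complex.Gamma (ν + n + m + 1) = 0 := by
  have telescope := Finset.sum_range_sub (fun m : ℕ => (-1) ^ (m + 1) * (m : ℂ) *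
    Complex.Gamma (ν + m) * (n.choose m : ℂ) / Complex.Gamma (ν + n + m)) (n + 1)
  simp only [Nat.choose_succ_self, Nat.cast_zero, mul_zero, zero_mul, zero_div, sub_zero]
    at telescope
  refine (mul_eq_zero.mp (Eq.trans ?_ telescope)).resolve_left
    (Nat.cast_ne_zero.mpr hn : (n : ℂ) ≠ 0)
  rw [Finset.mul_sum]
  refine Finset.sum_congr rfl fun m hm => ?_
  have choose_succ : (n.choose (m + 1) : ℂ) * (m + 1) = n.choose m * (n - m) := by
    rw [← Nat.cast_sub (Finset.mem_range_succ_iff.mp hm)]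
    exact_mod_cast Nat.choose_succ_right_eq n m
  have hνn := add_natCast_ne_neg_natCast hν n
  have Gamma_ne_zero := Complex.Gamma_ne_zero (add_natCast_ne_neg_natCast hνn m)
  have hν_add := add_natCast_ne_zero_of_ne_neg hν m
  have hνn_add := add_natCast_ne_zero_of_ne_neg hνn m
  rw [Nat.cast_succ, ← add_assoc ν, ← add_assoc (ν + n), Complex.Gamma_add_one _ hν_add,
    Complex.Gamma_add_one _ hνn_add]
  field_simp
  linear_combination (-1) * (-1) ^ m * (ν + m) * Complex.Gamma (ν + m) * choose_succ

lemma sum_antidiagonal_neumannTerm (w : ℂ) (n : ℕ) :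
    ∑ p ∈ Finset.HasAntidiagonal.antidiagonal n, neumannTerm ν w p.1 p.2 =
      if n = 0 then 1 else 0 := by
  rw [Finset.Nat.sum_antidiagonal_eq_sum_range_succ (neumannTerm ν w)]
  rcases eq_or_ne n 0 with rfl | hn
  · have hν0 : ν ≠ 0 := by simpa using hν 0
    simp [neumannTerm, Complex.Gamma_add_one _ hν0]
    have Gamma_ne_zero := Complex.Gamma_ne_zero hν
    field_simp
  · rw [if_neg hn, ← mul_zero ((-1) ^ n * w ^ n / (n.factorial : ℂ)),
      ← sum_range_neg_one_pow_mul_Gamma_mul_choose hν hn, Finset.mul_sum]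
    refine Finset.sum_congr rfl fun m hm => ?_
    obtain ⟨k, rfl⟩ := Nat.exists_eq_add_of_le (Finset.mem_range_succ_iff.mp hm)
    have factorial_ne_zero : ((m + k).factorial : ℂ) ≠ 0 :=
      Nat.cast_ne_zero.mpr (Nat.factorial_ne_zero _)
    have sign : (-1 : ℂ) ^ (m + k) * (-1) ^ m = (-1) ^ k := by
      rw [pow_add, mul_right_comm, ← mul_pow, neg_one_mul, neg_neg, one_pow, one_mul]
    have Gamma_arg : ν + 2 * (m : ℂ) + k + 1 = ν + (m + k : ℕ) + m + 1 := by
      push_cast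
      ring
    rw [neumannTerm, Nat.add_sub_cancel_left, Gamma_arg, Nat.cast_add_choose, ← sign]
    field_simp
    ring

lemma tsum_mul_besselJ {z : ℝ} (hz : z ≠ 0) :
    ∑' m : ℕ, (ν + 2 * (m : ℂ)) * Complex.Gamma (ν + m) / (m.factorial : ℂ) *
      besselJ (ν + 2 * m) z = ((z : ℂ) / 2) ^ ν := by
  simp only [mul_besselJ_eq_tsum_neumannTerm ν hz, tsum_mul_left]
  rw [tsum_tsum_eq_tsum_sum_antidiagonal (summable_neumannTerm hν _)]
  simp only [sum_antidiagonal_neumannTerm hν, tsum_ite_eq, mul_one]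

end NeumannSeries

-- At the poles c = -n, `Gamma (-n) = 0` and `x / 0 = 0` implement the convention 1/Γ(-n) = 0.
theorem stmt6_general (b c ν s : ℂ) (hs : 0 < s.re) (hcs : 0 < (c + ν + s).re)
    (hν : ∀ n : ℕ, ν ≠ -n) (z : ℝ) (hz : z ≠ 0) :
    (∫ ρ in Ioi (0 : ℝ), (ρ : ℂ) ^ (s - 1) * unifiedG b c ν (ρ : ℂ) (z : ℂ)) =
      Complex.Gamma s * Complex.Gamma (c + ν + s) /
          (Complex.Gamma (ν + 1) ^ 2 * Complex.Gamma c) *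
        hyp2F3 ((c + ν + s) / 2) ((c + ν + s + 1) / 2) (ν + 1) ((ν + 1) / 2) ((ν + 2) / 2)
          (-b * (z : ℂ) ^ 2 / 4) *
        ∑' m : ℕ, (ν + 2 * (m : ℂ)) * Complex.Gamma (ν + (m : ℂ)) / (m.factorial : ℂ) *
          besselJ (ν + 2 * (m : ℂ)) z := by
  have hν1 (n : ℕ) : ν + 1 ≠ -n := by simpa using add_natCast_ne_neg_natCast hν 1 n
  have mellin_eq := mellin_unifiedG (b := b) hν1 hs hcs (Complex.ofReal_ne_zero.mpr hz)
  simp only [mellin, smul_eq_mul] at mellin_eq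
  rw [mellin_eq, tsum_mul_besselJ hν hz]
  ring

theorem stmt6 (b c ν s : ℂ) (hc : 0 < c.re) (hν : -1 < ν.re) (hs : 0 < s.re)
    (hcs : 0 < (c + ν + s).re) (hνm : ∀ m : ℕ, ∀ j : ℕ, ν + (m:ℂ) ≠ -(j:ℂ))
    (z : ℝ) (hz : 0 < z) :
    (∫ ρ in Ioi (0:ℝ), (ρ:ℂ) ^ (s - 1) * unifiedG b c ν (ρ:ℂ) (z:ℂ)) =
      Complex.Gamma s * Complex.Gamma (c + ν + s) /
          (Complex.Gamma (ν + 1) ^ 2 * Complex.Gamma c) *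
        hyp2F3 ((c + ν + s) / 2) ((c + ν + s + 1) / 2) (ν + 1) ((ν + 1) / 2) ((ν + 2) / 2)
          (-b * (z:ℂ) ^ 2 / 4) *
        ∑' m : ℕ, (ν + 2 * (m:ℂ)) * Complex.Gamma (ν + (m:ℂ)) / (m.factorial : ℂ) *
          besselJ (ν + 2 * (m:ℂ)) z :=
  stmt6_general b c ν s hs hcs (fun n => by simpa using hνm 0 n) z hz.ne'
end

section
/- Let b, c, ν, ρ ∈ ℂ with Re(ρ) > 0, Re(c) > 0 and Re(ν) > -1/2, and let z > 0 be real. Then the unified four parameter Bessel function admits the three-fold integral representation G_ν^{(b,c)}(z;ρ) = ((z/2)^ν / (π Γ(c) Γ(ν+1/2)²)) · ∫_0^1 ∫_0^1 ∫_0^1 t^{-1/2} u^{-1/2} s^{c+ν-1} (1-t)^{ν-1/2} (1-u)^{ν-1/2} (1-s)^{-c-ν-1} · exp( -(s² + ρ(1-s)²)/(s(1-s)) ) · ₀F₃(-; 1/4, 3/4, 1/2; -b z² s² u² t / (16(1-s)²)) ds dt du, the triple integral being over real s, t, u ∈ (0,1). -/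
open Complex MeasureTheory Real Set

open Filter Topology

/-!
The substitution `x = s / (1 - s)` turns the `s`-integral into
`∫₀^∞ x ^ (μ - 1) e ^ (-x - ρ / x) ₀F₃(w x²) dx` with `μ = c + ν`. Expanding `₀F₃` and integrating
termwise, the `s`-, `t`- and `u`-integrals of the `k`-th term become `Γ_ρ(μ + 2k)`,
`B(1/2 + k, ν + 1/2)` and `B(1/2 + 2k, ν + 1/2)`. By the duplication formula the parameters `1/4`
and `3/4` contribute `(1/4)_k (3/4)_k = (1/2)_{2k} / 4 ^ k`, so the Pochhammer symbols in the
denominator of `₀F₃` cancel those in the numerators of the two Beta integrals, which leaves the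
series of `G`. The interchange is legitimate because `Γ_ρ(μ + n)` is `O(2 ^ n n!)`, whereas the
`k`-th coefficient of `₀F₃` decays like `k! ^ (-4)` up to a power of `k`.
-/

section Hypergeometric

lemma poch_succ {a : ℂ} {k : ℕ} (h : a + k ≠ 0) : poch a (k + 1) = poch a k * (a + k) := by
  rw [poch, poch, Nat.cast_succ, ← add_assoc, Complex.Gamma_add_one _ h, mul_comm (a + k),
    mul_div_right_comm]

lemma poch_mul_poch_add_half (a : ℂ) (k : ℕ) :
    poch a k * poch (a + 1 / 2) k * 4 ^ k = poch (2 * a) (2 * k) := by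
  have hpow : (2 : ℂ) ^ (1 - 2 * (a + k)) * 4 ^ k = 2 ^ (1 - 2 * a) := by
    rw [show (4 : ℂ) ^ k = 2 ^ ((2 * k : ℕ) : ℂ) by rw [Complex.cpow_natCast, pow_mul]; norm_num,
      ← Complex.cpow_add _ _ two_ne_zero]
    push_cast
    ring_nf
  have hpi : ((√π : ℝ) : ℂ) ≠ 0 := by exact_mod_cast (Real.sqrt_pos.mpr Real.pi_pos).ne'
  have htwo : (2 : ℂ) ^ (1 - 2 * a) ≠ 0 := by simp [Complex.cpow_eq_zero_iff]
  calc poch a k * poch (a + 1 / 2) k * 4 ^ k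
      = Complex.Gamma (a + k) * Complex.Gamma (a + k + 1 / 2) * 4 ^ k /
          (Complex.Gamma a * Complex.Gamma (a + 1 / 2)) := by
        rw [poch, poch, add_right_comm a (1 / 2)]
        ring
    _ = Complex.Gamma (2 * (a + k)) * (2 ^ (1 - 2 * (a + k)) * 4 ^ k) * (√π : ℝ) /
          (Complex.Gamma (2 * a) * 2 ^ (1 - 2 * a) * (√π : ℝ)) := by
        rw [Complex.Gamma_mul_Gamma_add_half, Complex.Gamma_mul_Gamma_add_half]
        ring
    _ = poch (2 * a) (2 * k) := by
        rw [hpow, mul_div_mul_right _ _ hpi, mul_div_mul_right _ _ htwo, poch]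
        push_cast
        rw [mul_add]

/-- The coefficient of `w ^ k` in the power series `₀F₃(-; a₁, a₂, a₃; w)`. -/
noncomputable def hyp0F3Coeff (a₁ a₂ a₃ : ℂ) (k : ℕ) : ℂ :=
  (poch a₁ k * poch a₂ k * poch a₃ k * (k.factorial : ℂ))⁻¹

lemma hyp0F3_eq_tsum (a₁ a₂ a₃ w : ℂ) :
    hyp0F3 a₁ a₂ a₃ w = ∑' k : ℕ, hyp0F3Coeff a₁ a₂ a₃ k * w ^ k :=
  tsum_congr fun _ => div_eq_inv_mul _ _

lemma eventually_add_natCast_ne_zero (a : ℂ) : ∀ᶠ k : ℕ in atTop, a + k ≠ 0 := by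
  filter_upwards [eventually_gt_atTop ⌈‖a‖⌉₊] with k hk h
  have hnorm : ‖a‖ = k := by rw [eq_neg_of_add_eq_zero_left h, norm_neg, Complex.norm_natCast]
  exact (Nat.lt_of_ceil_lt hk).ne hnorm

lemma eventually_hyp0F3Coeff_succ (a₁ a₂ a₃ : ℂ) :
    ∀ᶠ k : ℕ in atTop, hyp0F3Coeff a₁ a₂ a₃ (k + 1) =
      hyp0F3Coeff a₁ a₂ a₃ k * ((a₁ + k) * (a₂ + k) * (a₃ + k) * (k + 1))⁻¹ := by
  filter_upwards [eventually_add_natCast_ne_zero a₁, eventually_add_natCast_ne_zero a₂,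
    eventually_add_natCast_ne_zero a₃] with k h₁ h₂ h₃
  rw [hyp0F3Coeff, hyp0F3Coeff, poch_succ h₁, poch_succ h₂, poch_succ h₃, Nat.factorial_succ,
    ← mul_inv]
  push_cast
  ring

lemma tendsto_inv_add_natCast (a : ℂ) : Tendsto (fun k : ℕ => (a + k)⁻¹) atTop (𝓝 0) :=
  tendsto_inv₀_cobounded.comp
    ((tendsto_const_add_cobounded a).comp tendsto_natCast_atTop_cobounded)

lemma tendsto_hyp0F3_ratio (a₁ a₂ a₃ w : ℂ) :
    Tendsto (fun k : ℕ => ((a₁ + k) * (a₂ + k) * (a₃ + k) * (k + 1))⁻¹ * w *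
      ((2 * k + 2) * (2 * k + 1))) atTop (𝓝 0) := by
  have hlin : Tendsto (fun k : ℕ => (1 + 2 * (k : ℂ)) / (a₁ + 1 * k)) atTop (𝓝 (2 / 1)) :=
    tendsto_add_mul_div_add_mul_atTop_nhds 1 a₁ 2 one_ne_zero
  have h := ((hlin.mul (tendsto_inv_add_natCast a₂)).mul (tendsto_inv_add_natCast a₃)).const_mul
    (2 * w)
  rw [mul_zero, mul_zero] at h
  refine h.congr fun k => ?_
  have hk : (k : ℂ) + 1 ≠ 0 := Nat.cast_add_one_ne_zero k
  simp only [mul_inv, div_eq_mul_inv, one_mul]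
  field_simp
  ring

lemma summable_hyp0F3Coeff_mul_factorial (a₁ a₂ a₃ w : ℂ) :
    Summable fun k : ℕ => hyp0F3Coeff a₁ a₂ a₃ k * w ^ k * ((2 * k).factorial : ℂ) := by
  refine summable_of_ratio_norm_eventually_le (r := 1 / 2) (by norm_num) ?_
  filter_upwards [eventually_hyp0F3Coeff_succ a₁ a₂ a₃,
    (tendsto_hyp0F3_ratio a₁ a₂ a₃ w).norm.eventually_le_const
      (u := 1 / 2) (by norm_num)] with k hsucc hratio
  have hfact : ((2 * (k + 1)).factorial : ℂ) =
      (2 * k + 2) * (2 * k + 1) * ((2 * k).factorial : ℂ) := by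
    rw [show 2 * (k + 1) = 2 * k + 1 + 1 by ring, Nat.factorial_succ, Nat.factorial_succ]
    push_cast
    ring
  calc ‖hyp0F3Coeff a₁ a₂ a₃ (k + 1) * w ^ (k + 1) * ((2 * (k + 1)).factorial : ℂ)‖
      = ‖((a₁ + k) * (a₂ + k) * (a₃ + k) * (k + 1))⁻¹ * w * ((2 * k + 2) * (2 * k + 1))‖ *
          ‖hyp0F3Coeff a₁ a₂ a₃ k * w ^ k * ((2 * k).factorial : ℂ)‖ := by
        rw [hsucc, hfact, ← norm_mul]
        ring_nf
    _ ≤ 1 / 2 * ‖hyp0F3Coeff a₁ a₂ a₃ k * w ^ k * ((2 * k).factorial : ℂ)‖ := by gcongr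

lemma summable_norm_hyp0F3Coeff_mul_pow (a₁ a₂ a₃ w : ℂ) :
    Summable fun k : ℕ => ‖hyp0F3Coeff a₁ a₂ a₃ k * w ^ k‖ *
      (2 ^ (2 * k) * ((2 * k).factorial : ℝ)) := by
  refine (summable_hyp0F3Coeff_mul_factorial a₁ a₂ a₃ (4 * w)).norm.congr fun k => ?_
  simp only [norm_mul, norm_pow, Complex.norm_natCast, Complex.norm_ofNat, pow_mul, mul_pow]
  ring

end Hypergeometric

section TermwiseIntegration

lemma integral_mul_tsum_mul_pow {α : Type*} [MeasurableSpace α] {μ : Measure α} {f g : α → ℂ}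
    {A : ℕ → ℂ} (hint : ∀ k, Integrable (fun x => f x * g x ^ k) μ)
    (hsum : Summable fun k => ‖A k‖ * ∫ x, ‖f x * g x ^ k‖ ∂μ) :
    ∫ x, f x * ∑' k, A k * g x ^ k ∂μ = ∑' k, A k * ∫ x, f x * g x ^ k ∂μ := by
  have h := integral_tsum_of_summable_integral_norm (μ := μ)
    (F := fun k x => A k * (f x * g x ^ k)) (fun k => (hint k).const_mul _)
    (by simpa only [norm_mul (A _), integral_const_mul] using hsum)
  simp only [integral_const_mul] at h
  simp only [h, ← tsum_mul_left, mul_left_comm]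

lemma cpow_add_natCast_sub_one {x : ℂ} (hx : x ≠ 0) (a : ℂ) (n : ℕ) :
    x ^ (a + n - 1) = x ^ (a - 1) * x ^ n := by
  rw [add_sub_right_comm, Complex.cpow_add _ _ hx, Complex.cpow_natCast]

end TermwiseIntegration

section ExtGamma

lemma integrableOn_rpow_mul_exp_neg_mul_sub_div {p r : ℝ} (hp : 0 < p) (hr : 0 < r) (s : ℝ) :
    IntegrableOn (fun x : ℝ => x ^ (s - 1) * Real.exp (-p * x - r / x)) (Ioi 0) := by
  have hcont : ContinuousOn (fun x : ℝ => Real.exp (-p * x - r / x)) (Ioi 0) := by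
    fun_prop (disch := exact fun x hx => (mem_Ioi.mp hx).ne')
  have hle_top : ∀ x ∈ Ioi (0 : ℝ), Real.exp (-p * x - r / x) ≤ Real.exp (-p * x) := fun x hx =>
    Real.exp_le_exp.mpr (sub_le_self _ (div_nonneg hr.le (mem_Ioi.mp hx).le))
  have hle_zero : ∀ x ∈ Ioi (0 : ℝ), Real.exp (-p * x - r / x) ≤ Real.exp (-r * x⁻¹) := fun x hx =>
    Real.exp_le_exp.mpr (by
      have := mul_pos hp (mem_Ioi.mp hx)
      rw [div_eq_mul_inv]; linarith)
  refine mellin_convergent_of_isBigO_scalar (a := s + 1) (b := s - 1)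
    (hcont.locallyIntegrableOn measurableSet_Ioi) ?_ (by linarith) ?_ (by linarith)
  · refine .trans (.of_bound' ?_) (isLittleO_exp_neg_mul_rpow_atTop hp _).isBigO
    filter_upwards [Ioi_mem_atTop 0] with x hx
    simpa only [Real.norm_eq_abs, Real.abs_exp] using hle_top x hx
  · have hdecay := ((isLittleO_exp_neg_mul_rpow_atTop hr (s - 1)).comp_tendsto
      tendsto_inv_nhdsGT_zero).isBigO
    refine .trans (.of_bound' ?_) (hdecay.congr' .rfl ?_)
    · filter_upwards [self_mem_nhdsWithin] with x hx
      simpa only [Real.norm_eq_abs, Real.abs_exp, Function.comp_apply] using hle_zero x hx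
    · filter_upwards [self_mem_nhdsWithin] with x hx
      rw [Function.comp_apply, Real.inv_rpow (mem_Ioi.mp hx).le,
        Real.rpow_neg (mem_Ioi.mp hx).le]

/-- The integrand of the extended Gamma function `Γ_ρ(μ)`. -/
noncomputable def extGammaIntegrand (ρ μ : ℂ) (x : ℝ) : ℂ :=
  (x : ℂ) ^ (μ - 1) * Complex.exp (-(x : ℂ) - ρ / x)

lemma extGamma_add_natCast (ρ μ : ℂ) (n : ℕ) :
    extGamma ρ (μ + n) = ∫ x in Ioi (0 : ℝ), extGammaIntegrand ρ μ x * (x : ℂ) ^ n := by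
  refine setIntegral_congr_fun measurableSet_Ioi fun x hx => ?_
  have hx' : (x : ℂ) ≠ 0 := Complex.ofReal_ne_zero.mpr (mem_Ioi.mp hx).ne'
  simp only [extGammaIntegrand, cpow_add_natCast_sub_one hx', mul_right_comm]

lemma continuousOn_extGammaIntegrand (ρ μ : ℂ) :
    ContinuousOn (extGammaIntegrand ρ μ) (Ioi 0) := by
  intro x hx
  have hx' : (x : ℂ) ≠ 0 := Complex.ofReal_ne_zero.mpr (mem_Ioi.mp hx).ne'
  refine ((Complex.continuousAt_ofReal_cpow_const _ _ (.inr (mem_Ioi.mp hx).ne')).mul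
    ?_).continuousWithinAt
  fun_prop (disch := assumption)

lemma norm_extGammaIntegrand (ρ μ : ℂ) {x : ℝ} (hx : 0 < x) :
    ‖extGammaIntegrand ρ μ x‖ = x ^ (μ.re - 1) * Real.exp (-x - ρ.re / x) := by
  rw [extGammaIntegrand, norm_mul, Complex.norm_cpow_eq_rpow_re_of_pos hx, Complex.norm_exp,
    Complex.sub_re, Complex.sub_re, Complex.one_re, Complex.neg_re, Complex.ofReal_re,
    Complex.div_ofReal_re]

lemma norm_extGammaIntegrand_mul_pow_le (ρ μ : ℂ) (n : ℕ) {x : ℝ} (hx : 0 < x) :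
    ‖extGammaIntegrand ρ μ x * (x : ℂ) ^ n‖ ≤
      2 ^ n * n.factorial * (x ^ (μ.re - 1) * Real.exp (-(1 / 2) * x - ρ.re / x)) := by
  have hpow : x ^ n ≤ 2 ^ n * n.factorial * Real.exp (x / 2) := by
    have h := Real.pow_div_factorial_le_exp (x / 2) (by positivity) n
    rw [div_pow, div_div, div_le_iff₀ (by positivity)] at h
    linarith
  rw [norm_mul, norm_extGammaIntegrand ρ μ hx, norm_pow, Complex.norm_of_nonneg hx.le]
  calc x ^ (μ.re - 1) * Real.exp (-x - ρ.re / x) * x ^ n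
      ≤ x ^ (μ.re - 1) * Real.exp (-x - ρ.re / x) *
          (2 ^ n * n.factorial * Real.exp (x / 2)) := by gcongr
    _ = 2 ^ n * n.factorial *
          (x ^ (μ.re - 1) * (Real.exp (-x - ρ.re / x) * Real.exp (x / 2))) := by ring
    _ = _ := by rw [← Real.exp_add]; ring_nf

lemma integrableOn_extGammaIntegrand_mul_pow {ρ : ℂ} (hρ : 0 < ρ.re) (μ : ℂ) (n : ℕ) :
    IntegrableOn (fun x : ℝ => extGammaIntegrand ρ μ x * (x : ℂ) ^ n) (Ioi 0) :=
  ((integrableOn_rpow_mul_exp_neg_mul_sub_div one_half_pos hρ μ.re).const_mul _).mono'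
    (((continuousOn_extGammaIntegrand ρ μ).mul (by fun_prop)).aestronglyMeasurable
      measurableSet_Ioi)
    (ae_restrict_of_forall_mem measurableSet_Ioi fun _ hx =>
      norm_extGammaIntegrand_mul_pow_le ρ μ n hx)

lemma integral_norm_extGammaIntegrand_mul_pow_le {ρ : ℂ} (hρ : 0 < ρ.re) (μ : ℂ) (n : ℕ) :
    ∫ x in Ioi (0 : ℝ), ‖extGammaIntegrand ρ μ x * (x : ℂ) ^ n‖ ≤
      2 ^ n * n.factorial *
        ∫ x in Ioi (0 : ℝ), x ^ (μ.re - 1) * Real.exp (-(1 / 2) * x - ρ.re / x) := by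
  rw [← integral_const_mul]
  exact setIntegral_mono_on (integrableOn_extGammaIntegrand_mul_pow hρ μ n).norm
    ((integrableOn_rpow_mul_exp_neg_mul_sub_div one_half_pos hρ μ.re).const_mul _)
    measurableSet_Ioi fun _ hx => norm_extGammaIntegrand_mul_pow_le ρ μ n hx

lemma summable_norm_mul_integral_norm_extGammaIntegrand {ρ : ℂ} (hρ : 0 < ρ.re) (μ : ℂ)
    {A : ℕ → ℂ} {m : ℕ}
    (hA : Summable fun k => ‖A k‖ * (2 ^ (m * k) * ((m * k).factorial : ℝ))) :
    Summable fun k =>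
      ‖A k‖ * ∫ x in Ioi (0 : ℝ), ‖extGammaIntegrand ρ μ x * (x : ℂ) ^ (m * k)‖ := by
  refine .of_nonneg_of_le (fun k => by positivity) (fun k => ?_) (hA.mul_right
    (∫ x in Ioi (0 : ℝ), x ^ (μ.re - 1) * Real.exp (-(1 / 2) * x - ρ.re / x)))
  rw [mul_assoc]
  gcongr
  exact integral_norm_extGammaIntegrand_mul_pow_le hρ μ (m * k)

lemma summable_norm_mul_extGamma {ρ : ℂ} (hρ : 0 < ρ.re) (μ : ℂ) {A : ℕ → ℂ} {m : ℕ}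
    (hA : Summable fun k => ‖A k‖ * (2 ^ (m * k) * ((m * k).factorial : ℝ))) :
    Summable fun k => ‖A k * extGamma ρ (μ + (m * k : ℕ))‖ := by
  refine .of_nonneg_of_le (fun k => norm_nonneg _) (fun k => ?_)
    (summable_norm_mul_integral_norm_extGammaIntegrand hρ μ hA)
  rw [norm_mul, extGamma_add_natCast]
  gcongr
  exact norm_integral_le_integral_norm _

lemma integral_extGammaIntegrand_mul_tsum {ρ : ℂ} (hρ : 0 < ρ.re) (μ : ℂ) {A : ℕ → ℂ} {m : ℕ}
    (hA : Summable fun k => ‖A k‖ * (2 ^ (m * k) * ((m * k).factorial : ℝ))) :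
    ∫ x in Ioi (0 : ℝ), extGammaIntegrand ρ μ x * ∑' k, A k * ((x : ℂ) ^ m) ^ k =
      ∑' k, A k * extGamma ρ (μ + (m * k : ℕ)) := by
  simp only [extGamma_add_natCast, pow_mul]
  refine integral_mul_tsum_mul_pow (fun k => ?_) ?_
  · simpa only [← pow_mul, IntegrableOn] using integrableOn_extGammaIntegrand_mul_pow hρ μ (m * k)
  · simpa only [← pow_mul] using summable_norm_mul_integral_norm_extGammaIntegrand hρ μ hA

lemma integral_extGammaIntegrand_mul_hyp0F3 {ρ : ℂ} (hρ : 0 < ρ.re) (μ a₁ a₂ a₃ w : ℂ) :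
    ∫ x in Ioi (0 : ℝ), extGammaIntegrand ρ μ x * hyp0F3 a₁ a₂ a₃ (w * (x : ℂ) ^ 2) =
      ∑' k : ℕ, hyp0F3Coeff a₁ a₂ a₃ k * w ^ k * extGamma ρ (μ + (2 * k : ℕ)) := by
  rw [← integral_extGammaIntegrand_mul_tsum hρ μ (summable_norm_hyp0F3Coeff_mul_pow a₁ a₂ a₃ w)]
  simp only [hyp0F3_eq_tsum, mul_pow, mul_assoc]

end ExtGamma

section UnitInterval

lemma bijOn_div_one_sub {K : Type*} [Field K] [LinearOrder K] [IsStrictOrderedRing K] :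
    BijOn (fun s : K => s / (1 - s)) (Ioo 0 1) (Ioi 0) := by
  refine InvOn.bijOn (f' := fun x => x / (1 + x)) ⟨fun s hs => ?_, fun x hx => ?_⟩
    (fun s hs => div_pos hs.1 (sub_pos.mpr hs.2)) (fun x hx => ?_)
  · have : 1 - s ≠ 0 := (sub_pos.mpr hs.2).ne'
    simp only
    field_simp
    ring
  · have : 1 + x ≠ 0 := (add_pos one_pos (mem_Ioi.mp hx)).ne'
    simp only
    field_simp
    ring
  · have hx : 0 < x := hx
    exact ⟨by positivity, (div_lt_one (by positivity)).mpr (lt_one_add x)⟩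

lemma hasDerivAt_div_one_sub {𝕜 : Type*} [NontriviallyNormedField 𝕜] {s : 𝕜} (hs : 1 - s ≠ 0) :
    HasDerivAt (fun s => s / (1 - s)) (1 / (1 - s) ^ 2) s := by
  convert! (hasDerivAt_id s).div ((hasDerivAt_id s).const_sub 1) hs using 1
  simp

lemma integral_Ioi_eq_integral_Ioo_div_one_sub {E : Type*} [NormedAddCommGroup E]
    [NormedSpace ℝ E] (g : ℝ → E) :
    ∫ x in Ioi (0 : ℝ), g x =
      ∫ s in Ioo (0 : ℝ) 1, (1 / (1 - s) ^ 2) • g (s / (1 - s)) := by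
  rw [← bijOn_div_one_sub.image_eq, integral_image_eq_integral_abs_deriv_smul measurableSet_Ioo
    (fun s hs => (hasDerivAt_div_one_sub (sub_pos.mpr hs.2).ne').hasDerivWithinAt)
    bijOn_div_one_sub.injOn]
  exact setIntegral_congr_fun measurableSet_Ioo fun s _ => by
    rw [abs_of_nonneg (one_div_nonneg.mpr (sq_nonneg (1 - s)))]

lemma cpow_div_one_sub {s : ℝ} (hs : s ∈ Ioo (0 : ℝ) 1) (a : ℂ) :
    ((s : ℂ) / (1 - s)) ^ a = (s : ℂ) ^ a * ((1 : ℂ) - s) ^ (-a) := by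
  have h := Complex.div_cpow_ofReal_nonneg hs.1.le (sub_pos.mpr hs.2).le a
  push_cast at h
  rw [h, Complex.cpow_neg, div_eq_mul_inv]

lemma smul_extGammaIntegrand_div_one_sub (ρ μ : ℂ) {s : ℝ} (hs : s ∈ Ioo (0 : ℝ) 1) :
    (1 / (1 - s) ^ 2) • extGammaIntegrand ρ μ (s / (1 - s)) =
      (s : ℂ) ^ (μ - 1) * ((1 : ℂ) - s) ^ (-μ - 1) *
        Complex.exp (-((s : ℂ) ^ 2 + ρ * ((1 : ℂ) - s) ^ 2) / ((s : ℂ) * ((1 : ℂ) - s))) := by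
  have hs₀ : (s : ℂ) ≠ 0 := by exact_mod_cast hs.1.ne'
  have hs₁ : (1 : ℂ) - s ≠ 0 := by exact_mod_cast (sub_pos.mpr hs.2).ne'
  have hpow : ((1 : ℂ) - s) ^ (-(μ - 1)) = ((1 : ℂ) - s) ^ (-μ - 1) * ((1 : ℂ) - s) ^ 2 := by
    rw [← Complex.cpow_ofNat, ← Complex.cpow_add _ _ hs₁]
    congr 1
    ring
  have hexp : -((s : ℂ) / (1 - s)) - ρ / ((s : ℂ) / (1 - s)) =
      -((s : ℂ) ^ 2 + ρ * ((1 : ℂ) - s) ^ 2) / ((s : ℂ) * ((1 : ℂ) - s)) := by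
    field_simp
    ring
  rw [extGammaIntegrand, Complex.real_smul]
  push_cast
  rw [cpow_div_one_sub hs, hpow, hexp]
  field_simp

lemma integral_Ioo_mul_hyp0F3 {ρ : ℂ} (hρ : 0 < ρ.re) (μ a₁ a₂ a₃ w : ℂ) :
    ∫ s in Ioo (0 : ℝ) 1, (s : ℂ) ^ (μ - 1) * ((1 : ℂ) - s) ^ (-μ - 1) *
        Complex.exp (-((s : ℂ) ^ 2 + ρ * ((1 : ℂ) - s) ^ 2) / ((s : ℂ) * ((1 : ℂ) - s))) *
        hyp0F3 a₁ a₂ a₃ (w * ((s : ℂ) / (1 - s)) ^ 2) =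
      ∑' k : ℕ, hyp0F3Coeff a₁ a₂ a₃ k * w ^ k * extGamma ρ (μ + (2 * k : ℕ)) := by
  rw [← integral_extGammaIntegrand_mul_hyp0F3 hρ, integral_Ioi_eq_integral_Ioo_div_one_sub]
  refine setIntegral_congr_fun measurableSet_Ioo fun s hs => ?_
  simp only [← smul_extGammaIntegrand_div_one_sub ρ μ hs, smul_mul_assoc, Complex.ofReal_div,
    Complex.ofReal_sub, Complex.ofReal_one]

end UnitInterval

section Beta

/-- The integrand of the Beta integral `B(u, v)`. -/
noncomputable def betaIntegrand (u v : ℂ) (x : ℝ) : ℂ :=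
  (x : ℂ) ^ (u - 1) * ((1 : ℂ) - x) ^ (v - 1)

lemma betaIntegral_add_natCast_eq_integral (u v : ℂ) (n : ℕ) :
    Complex.betaIntegral (u + n) v =
      ∫ x in Ioo (0 : ℝ) 1, betaIntegrand u v x * (x : ℂ) ^ n := by
  rw [Complex.betaIntegral, intervalIntegral.integral_of_le zero_le_one,
    integral_Ioc_eq_integral_Ioo]
  refine setIntegral_congr_fun measurableSet_Ioo fun x hx => ?_
  have hx' : (x : ℂ) ≠ 0 := Complex.ofReal_ne_zero.mpr hx.1.ne'
  simp only [betaIntegrand, cpow_add_natCast_sub_one hx', mul_right_comm]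

lemma norm_mul_ofReal_pow_le (y : ℂ) {x : ℝ} (hx : x ∈ Ioo (0 : ℝ) 1) (n : ℕ) :
    ‖y * (x : ℂ) ^ n‖ ≤ ‖y‖ := by
  rw [norm_mul, norm_pow, Complex.norm_of_nonneg hx.1.le]
  exact mul_le_of_le_one_right (norm_nonneg y) (pow_le_one₀ hx.1.le hx.2.le)

variable {u v : ℂ} {A : ℕ → ℂ}

lemma integrableOn_betaIntegrand (hu : 0 < u.re) (hv : 0 < v.re) :
    IntegrableOn (betaIntegrand u v) (Ioo 0 1) :=
  (intervalIntegrable_iff_integrableOn_Ioo_of_le zero_le_one).mp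
    (Complex.betaIntegral_convergent hu hv)

lemma integrableOn_betaIntegrand_mul_pow (hu : 0 < u.re) (hv : 0 < v.re) (n : ℕ) :
    IntegrableOn (fun x : ℝ => betaIntegrand u v x * (x : ℂ) ^ n) (Ioo 0 1) :=
  Integrable.mono (integrableOn_betaIntegrand hu hv)
    ((integrableOn_betaIntegrand hu hv).aestronglyMeasurable.mul
      (Complex.continuous_ofReal.pow n).aestronglyMeasurable)
    (ae_restrict_of_forall_mem measurableSet_Ioo fun _ hx => norm_mul_ofReal_pow_le _ hx n)

lemma summable_norm_mul_integral_norm_betaIntegrand (hu : 0 < u.re) (hv : 0 < v.re)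
    (hA : Summable fun k => ‖A k‖) (m : ℕ) :
    Summable fun k =>
      ‖A k‖ * ∫ x in Ioo (0 : ℝ) 1, ‖betaIntegrand u v x * (x : ℂ) ^ (m * k)‖ := by
  refine .of_nonneg_of_le (fun k => by positivity) (fun k => ?_)
    (hA.mul_right (∫ x in Ioo (0 : ℝ) 1, ‖betaIntegrand u v x‖))
  gcongr ‖A k‖ * ?_
  exact setIntegral_mono_on (integrableOn_betaIntegrand_mul_pow hu hv (m * k)).norm
    (integrableOn_betaIntegrand hu hv).norm measurableSet_Ioo
    fun _ hx => norm_mul_ofReal_pow_le _ hx (m * k)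

lemma summable_norm_mul_betaIntegral (hu : 0 < u.re) (hv : 0 < v.re)
    (hA : Summable fun k => ‖A k‖) (m : ℕ) :
    Summable fun k => ‖A k * Complex.betaIntegral (u + (m * k : ℕ)) v‖ := by
  refine .of_nonneg_of_le (fun k => norm_nonneg _) (fun k => ?_)
    (summable_norm_mul_integral_norm_betaIntegrand hu hv hA m)
  rw [norm_mul, betaIntegral_add_natCast_eq_integral]
  gcongr
  exact norm_integral_le_integral_norm _

lemma integral_betaIntegrand_mul_tsum (hu : 0 < u.re) (hv : 0 < v.re)
    (hA : Summable fun k => ‖A k‖) (m : ℕ) :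
    ∫ x in Ioo (0 : ℝ) 1, betaIntegrand u v x * ∑' k, A k * ((x : ℂ) ^ m) ^ k =
      ∑' k, A k * Complex.betaIntegral (u + (m * k : ℕ)) v := by
  simp only [betaIntegral_add_natCast_eq_integral, pow_mul]
  refine integral_mul_tsum_mul_pow (fun k => ?_) ?_
  · simpa only [← pow_mul, IntegrableOn] using integrableOn_betaIntegrand_mul_pow hu hv (m * k)
  · simpa only [← pow_mul] using summable_norm_mul_integral_norm_betaIntegrand hu hv hA m

lemma integral_integral_betaIntegrand_mul_tsum {u' v' : ℂ} (hu : 0 < u.re) (hv : 0 < v.re)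
    (hu' : 0 < u'.re) (hv' : 0 < v'.re) (hA : Summable fun k => ‖A k‖) (m n : ℕ) :
    ∫ x in Ioo (0 : ℝ) 1, ∫ y in Ioo (0 : ℝ) 1, betaIntegrand u v x * (betaIntegrand u' v' y *
        ∑' k, A k * ((x : ℂ) ^ m) ^ k * ((y : ℂ) ^ n) ^ k) =
      ∑' k, A k * Complex.betaIntegral (u' + (n * k : ℕ)) v' *
        Complex.betaIntegral (u + (m * k : ℕ)) v := by
  rw [← integral_betaIntegrand_mul_tsum hu hv (summable_norm_mul_betaIntegral hu' hv' hA n)]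
  refine setIntegral_congr_fun measurableSet_Ioo fun x hx => ?_
  have hAx : Summable fun k => ‖A k * ((x : ℂ) ^ m) ^ k‖ :=
    .of_nonneg_of_le (fun k => norm_nonneg _)
      (fun k => by simpa only [← pow_mul] using norm_mul_ofReal_pow_le (A k) hx (m * k)) hA
  simp only [integral_const_mul, integral_betaIntegrand_mul_tsum hu' hv' hAx n, mul_right_comm]

lemma poch_ne_zero_s16 (hu : 0 < u.re) (n : ℕ) : poch u n ≠ 0 := by
  have hun : 0 < (u + n).re := by
    rw [Complex.add_re, Complex.natCast_re]
    positivity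
  exact div_ne_zero (Complex.Gamma_ne_zero_of_re_pos hun) (Complex.Gamma_ne_zero_of_re_pos hu)

lemma betaIntegral_add_natCast (hu : 0 < u.re) (hv : 0 < v.re) (n : ℕ) :
    Complex.betaIntegral (u + n) v =
      poch u n * (Complex.Gamma u * Complex.Gamma v) / Complex.Gamma (u + v + n) := by
  have hun : 0 < (u + n).re := by
    rw [Complex.add_re, Complex.natCast_re]
    positivity
  rw [Complex.betaIntegral_eq_Gamma_mul_div _ _ hun hv, poch, ← mul_assoc,
    div_mul_cancel₀ _ (Complex.Gamma_ne_zero_of_re_pos hu), add_right_comm]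

lemma hyp0F3Coeff_mul_betaIntegral_mul_betaIntegral {a b : ℂ} (ha : 0 < a.re) (hb : 0 < b.re)
    (hu : 0 < u.re) (hv : 0 < v.re) (k : ℕ) :
    hyp0F3Coeff a (a + 1 / 2) b k * Complex.betaIntegral (b + k) u *
        Complex.betaIntegral (2 * a + (2 * k : ℕ)) v =
      4 ^ k * (Complex.Gamma b * Complex.Gamma u) * (Complex.Gamma (2 * a) * Complex.Gamma v) /
        ((k.factorial : ℂ) * Complex.Gamma (b + u + k) *
          Complex.Gamma (2 * a + v + (2 * k : ℕ))) := by
  have hre : 0 < (2 * a).re := by simpa using ha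
  have ha' : 0 < (a + 1 / 2).re := by
    rw [Complex.add_re]
    exact add_pos ha (by norm_num)
  have hpa := poch_ne_zero_s16 ha k
  have hpa' := poch_ne_zero_s16 ha' k
  have hpb := poch_ne_zero_s16 hb k
  rw [betaIntegral_add_natCast hb hu, betaIntegral_add_natCast hre hv, ← poch_mul_poch_add_half,
    hyp0F3Coeff]
  generalize poch (a + 1 / 2) k = p at hpa' ⊢
  field_simp

end Beta

section UnifiedBessel

variable {ν : ℂ}

lemma re_add_half_pos (hν : -(1 / 2 : ℝ) < ν.re) : 0 < (ν + 1 / 2).re := by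
  norm_num at hν ⊢
  linarith

lemma hyp0F3Coeff_mul_betaIntegral_half (hν : -(1 / 2 : ℝ) < ν.re) (k : ℕ) :
    hyp0F3Coeff (1 / 4) (3 / 4) (1 / 2) k *
        Complex.betaIntegral (1 / 2 + k) (ν + 1 / 2) *
        Complex.betaIntegral (1 / 2 + (2 * k : ℕ)) (ν + 1 / 2) =
      4 ^ k * (π * Complex.Gamma (ν + 1 / 2) ^ 2) /
        ((k.factorial : ℂ) * Complex.Gamma (ν + k + 1) * Complex.Gamma (ν + 2 * k + 1)) := by
  have hpi : Complex.Gamma (1 / 2) ^ 2 = π := by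
    rw [Complex.Gamma_one_half_eq, ← Complex.cpow_nat_mul]
    norm_num
  have h := hyp0F3Coeff_mul_betaIntegral_mul_betaIntegral (a := 1 / 4) (b := 1 / 2)
    (by norm_num) (by norm_num) (re_add_half_pos hν) (re_add_half_pos hν) k
  rw [show (1 / 4 + 1 / 2 : ℂ) = 3 / 4 by norm_num, show (2 * (1 / 4) : ℂ) = 1 / 2 by norm_num,
    show 1 / 2 + (ν + 1 / 2) + k = ν + k + 1 by ring,
    show 1 / 2 + (ν + 1 / 2) + (2 * k : ℕ) = ν + 2 * k + 1 by push_cast; ring] at h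
  rw [h, ← hpi]
  ring

lemma unifiedG_term_eq (b c ρ : ℂ) (hν : -(1 / 2 : ℝ) < ν.re) {z : ℂ} (hz : z ≠ 0) (k : ℕ) :
    (-b) ^ k * genPoch c ρ (2 * (k : ℂ) + ν) * (z / 2) ^ (2 * (k : ℂ) + ν) /
        ((k.factorial : ℂ) * Complex.Gamma (ν + (k : ℂ) + 1) *
          Complex.Gamma (ν + 2 * (k : ℂ) + 1)) =
      (z / 2) ^ ν / ((π : ℂ) * Complex.Gamma c * Complex.Gamma (ν + 1 / 2) ^ 2) *
        (hyp0F3Coeff (1 / 4) (3 / 4) (1 / 2) k * (-b * z ^ 2 / 16) ^ k *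
          extGamma ρ (c + ν + (2 * k : ℕ)) *
          Complex.betaIntegral (1 / 2 + (1 * k : ℕ)) (ν + 1 / 2) *
          Complex.betaIntegral (1 / 2 + (2 * k : ℕ)) (ν + 1 / 2)) := by
  have hG : Complex.Gamma (ν + 1 / 2) ≠ 0 :=
    Complex.Gamma_ne_zero_of_re_pos (re_add_half_pos hν)
  have hpi : (π : ℂ) ≠ 0 := Complex.ofReal_ne_zero.mpr Real.pi_ne_zero
  have hpow : (-b) ^ k * (z / 2) ^ (2 * (k : ℂ) + ν) =
      (z / 2) ^ ν * ((-b * z ^ 2 / 16) ^ k * 4 ^ k) := by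
    rw [Complex.cpow_add _ _ (div_ne_zero hz two_ne_zero), mul_comm 2 (k : ℂ),
      Complex.cpow_nat_mul, Complex.cpow_ofNat, ← mul_assoc, ← mul_pow, ← mul_pow, mul_comm]
    ring
  have hreorder (C w E B B' : ℂ) : C * w * E * B * B' = w * E * (C * B * B') := by ring
  rw [one_mul, hreorder, hyp0F3Coeff_mul_betaIntegral_half hν, mul_right_comm, hpow, genPoch,
    show c + (2 * (k : ℂ) + ν) = c + ν + (2 * k : ℕ) by push_cast; ring]
  generalize Complex.Gamma (ν + 1 / 2) = g at hG ⊢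
  field_simp

lemma integral_Ioo_eq_betaIntegrand_mul_tsum (b c ν z : ℂ) {ρ : ℂ} (hρ : 0 < ρ.re) (u t : ℝ) :
    ∫ s in Ioo (0 : ℝ) 1,
        (t : ℂ) ^ (-(1 / 2) : ℂ) * (u : ℂ) ^ (-(1 / 2) : ℂ) * (s : ℂ) ^ (c + ν - 1) *
          ((1 : ℂ) - t) ^ (ν - 1 / 2) * ((1 : ℂ) - u) ^ (ν - 1 / 2) *
          ((1 : ℂ) - s) ^ (-c - ν - 1) *
          Complex.exp (-((s : ℂ) ^ 2 + ρ * ((1 : ℂ) - s) ^ 2) / ((s : ℂ) * ((1 : ℂ) - s))) *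
          hyp0F3 (1 / 4) (3 / 4) (1 / 2)
            (-b * z ^ 2 * (s : ℂ) ^ 2 * (u : ℂ) ^ 2 * t / (16 * ((1 : ℂ) - s) ^ 2)) =
      betaIntegrand (1 / 2) (ν + 1 / 2) u * (betaIntegrand (1 / 2) (ν + 1 / 2) t *
        ∑' k : ℕ, hyp0F3Coeff (1 / 4) (3 / 4) (1 / 2) k * (-b * z ^ 2 / 16) ^ k *
          extGamma ρ (c + ν + (2 * k : ℕ)) * ((u : ℂ) ^ 2) ^ k * ((t : ℂ) ^ 1) ^ k) := by
  have hsum : ∑' k : ℕ, hyp0F3Coeff (1 / 4) (3 / 4) (1 / 2) k * (-b * z ^ 2 / 16) ^ k *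
        extGamma ρ (c + ν + (2 * k : ℕ)) * ((u : ℂ) ^ 2) ^ k * ((t : ℂ) ^ 1) ^ k =
      ∑' k : ℕ, hyp0F3Coeff (1 / 4) (3 / 4) (1 / 2) k * (-b * z ^ 2 / 16 * u ^ 2 * t) ^ k *
        extGamma ρ (c + ν + (2 * k : ℕ)) := tsum_congr fun k => by ring
  rw [hsum, ← integral_Ioo_mul_hyp0F3 hρ, ← integral_const_mul, ← integral_const_mul]
  congr 1 with s
  have harg : -b * z ^ 2 / 16 * (u : ℂ) ^ 2 * t * ((s : ℂ) / (1 - s)) ^ 2 =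
      -b * z ^ 2 * (s : ℂ) ^ 2 * (u : ℂ) ^ 2 * t / (16 * ((1 : ℂ) - s) ^ 2) := by
    rw [div_pow, div_mul_eq_div_div]
    ring
  rw [betaIntegrand, betaIntegrand, harg, show (1 / 2 - 1 : ℂ) = -(1 / 2) by norm_num,
    show ν + 1 / 2 - 1 = ν - 1 / 2 by ring, show -(c + ν) - 1 = -c - ν - 1 by ring]
  ring

theorem stmt16_general (b c : ℂ) {ν ρ : ℂ} (hρ : 0 < ρ.re) (hν : -(1 / 2 : ℝ) < ν.re)
    {z : ℂ} (hz : z ≠ 0) :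
    unifiedG b c ν ρ z =
      (z / 2) ^ ν / ((π : ℂ) * Complex.Gamma c * Complex.Gamma (ν + 1 / 2) ^ 2) *
        ∫ u in Ioo (0 : ℝ) 1, ∫ t in Ioo (0 : ℝ) 1, ∫ s in Ioo (0 : ℝ) 1,
          (t : ℂ) ^ (-(1 / 2) : ℂ) * (u : ℂ) ^ (-(1 / 2) : ℂ) * (s : ℂ) ^ (c + ν - 1) *
            ((1 : ℂ) - t) ^ (ν - 1 / 2) * ((1 : ℂ) - u) ^ (ν - 1 / 2) *
            ((1 : ℂ) - s) ^ (-c - ν - 1) *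
            Complex.exp (-((s : ℂ) ^ 2 + ρ * ((1 : ℂ) - s) ^ 2) / ((s : ℂ) * ((1 : ℂ) - s))) *
            hyp0F3 (1 / 4) (3 / 4) (1 / 2)
              (-b * z ^ 2 * (s : ℂ) ^ 2 * (u : ℂ) ^ 2 * t / (16 * ((1 : ℂ) - s) ^ 2)) := by
  have hu : 0 < (1 / 2 : ℂ).re := by norm_num
  have hv : 0 < (ν + 1 / 2).re := re_add_half_pos hν
  have hA := summable_norm_mul_extGamma hρ (c + ν)
    (summable_norm_hyp0F3Coeff_mul_pow (1 / 4) (3 / 4) (1 / 2) (-b * z ^ 2 / 16))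
  simp only [integral_Ioo_eq_betaIntegrand_mul_tsum b c ν z hρ]
  rw [integral_integral_betaIntegrand_mul_tsum hu hv hu hv hA, ← tsum_mul_left]
  exact tsum_congr (unifiedG_term_eq b c ρ hν hz)

end UnifiedBessel

theorem stmt16 (b c ν ρ : ℂ) (hρ : 0 < ρ.re) (hc : 0 < c.re)
    (hν : -(1/2 : ℝ) < ν.re) (z : ℝ) (hz : 0 < z) :
    unifiedG b c ν ρ (z:ℂ) =
      ((z:ℂ) / 2) ^ ν / ((π:ℂ) * Complex.Gamma c * Complex.Gamma (ν + 1/2) ^ 2) *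
        ∫ u in Ioo (0:ℝ) 1, ∫ t in Ioo (0:ℝ) 1, ∫ s in Ioo (0:ℝ) 1,
          (t:ℂ) ^ (-(1/2) : ℂ) * (u:ℂ) ^ (-(1/2) : ℂ) * (s:ℂ) ^ (c + ν - 1) *
            ((1:ℂ) - (t:ℂ)) ^ (ν - 1/2) * ((1:ℂ) - (u:ℂ)) ^ (ν - 1/2) *
            ((1:ℂ) - (s:ℂ)) ^ (-c - ν - 1) *
            Complex.exp (-((s:ℂ) ^ 2 + ρ * ((1:ℂ) - (s:ℂ)) ^ 2) / ((s:ℂ) * ((1:ℂ) - (s:ℂ)))) *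
            hyp0F3 (1/4) (3/4) (1/2)
              (-b * (z:ℂ) ^ 2 * (s:ℂ) ^ 2 * (u:ℂ) ^ 2 * (t:ℂ) / (16 * ((1:ℂ) - (s:ℂ)) ^ 2)) := by
  exact stmt16_general b c hρ hν (Complex.ofReal_ne_zero.mpr hz.ne')
end
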